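/- Let Ã be a symmetric N×N real matrix, W an H×H real matrix, V an F×H real matrix, and X an N×F real matrix, with K = ρ(Ã) · ‖W‖₂ < 1. Let H* be the unique fixed point of the reservoir map Φ(M) = tanh(Ã M W + X V), let H_t be the iterates H_{t+1} = Φ(H_t) from an arbitrary initial condition H₀, and H₁ = Φ(H₀). Then for every t ≥ 0, ‖H* − H_t‖_F ≤ (K^t / (1 − K)) · ‖H₁ − H₀‖_F. -/

import Mathlib

noncomputable def frobNorm {m n : Type*} [Fintype m] [Fintype n]
    (M : Matrix m n ℝ) : ℝ :=
  Real.sqrt (∑ i, ∑ j, (M i j) ^ 2)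

noncomputable def specNorm {m n : ℕ} (M : Matrix (Fin m) (Fin n) ℝ) : ℝ :=
  ‖LinearMap.toContinuousLinearMap (Matrix.toEuclideanLin M)‖

noncomputable def specRad {n : ℕ} (A : Matrix (Fin n) (Fin n) ℝ)
    (hA : A.IsHermitian) : ℝ :=
  ⨆ i, |hA.eigenvalues i|

noncomputable def mtanh {m n : Type*} (M : Matrix m n ℝ) : Matrix m n ℝ :=
  Matrix.of fun i j => Real.tanh (M i j)

noncomputable def resMap {N F Hd : ℕ} (Atil : Matrix (Fin N) (Fin N) ℝ)
    (W : Matrix (Fin Hd) (Fin Hd) ℝ) (V : Matrix (Fin F) (Fin Hd) ℝ)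
    (X : Matrix (Fin N) (Fin F) ℝ) (M : Matrix (Fin N) (Fin Hd) ℝ) :
    Matrix (Fin N) (Fin Hd) ℝ :=
  mtanh (Atil * M * W + X * V)

open scoped Matrix.Norms.L2Operator in
theorem aux_specNorm_eq {m n : ℕ} (M : Matrix (Fin m) (Fin n) ℝ) : specNorm M = ‖M‖ := by
  rw [Matrix.l2_opNorm_def]; rfl

open scoped Matrix.Norms.L2Operator in
theorem aux_specNorm_transpose {m n : ℕ} (M : Matrix (Fin m) (Fin n) ℝ) :
    specNorm M.transpose = specNorm M := by
  rw [aux_specNorm_eq, aux_specNorm_eq, ← Matrix.l2_opNorm_conjTranspose M,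
    Matrix.conjTranspose_eq_transpose_of_trivial]

open scoped Matrix.Norms.L2Operator in
theorem aux_specNorm_le {n : ℕ} (A : Matrix (Fin n) (Fin n) ℝ) (hA : A.IsHermitian) :
    specNorm A ≤ specRad A hA := by
  rw [aux_specNorm_eq]
  have h := hA.spectral_theorem
  rw [Unitary.conjStarAlgAut_apply] at h
  refine (congrArg norm h).trans_le ?_
  rw [CStarRing.norm_mul_mem_unitary _ (Unitary.star_mem hA.eigenvectorUnitary.2),
    CStarRing.norm_coe_unitary_mul, Matrix.l2_opNorm_diagonal]
  unfold specRad
  refine (pi_norm_le_iff_of_nonneg (Real.iSup_nonneg fun i => abs_nonneg _)).2 fun i => ?_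
  exact le_ciSup (f := fun i => |hA.eigenvalues i|) (Set.finite_range _).bddAbove i

theorem aux_frob_transpose {m n : ℕ} (M : Matrix (Fin m) (Fin n) ℝ) :
    frobNorm M.transpose = frobNorm M := by
  unfold frobNorm
  rw [Finset.sum_comm]; rfl

theorem aux_spec_nonneg {m n : ℕ} (M : Matrix (Fin m) (Fin n) ℝ) : 0 ≤ specNorm M :=
  norm_nonneg _

theorem aux_frob_nonneg {m n : ℕ} (M : Matrix (Fin m) (Fin n) ℝ) : 0 ≤ frobNorm M :=
  Real.sqrt_nonneg _

open scoped Matrix.Norms.L2Operator in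
theorem aux_frob_mul {l m n : ℕ} (A : Matrix (Fin l) (Fin m) ℝ) (M : Matrix (Fin m) (Fin n) ℝ) :
    frobNorm (A * M) ≤ specNorm A * frobNorm M := by
  unfold frobNorm
  rw [Finset.sum_comm, Finset.sum_comm (γ := Fin m)]
  apply Real.sqrt_le_iff.2
  refine ⟨mul_nonneg (aux_spec_nonneg _) (Real.sqrt_nonneg _), ?_⟩
  rw [mul_pow, Real.sq_sqrt (by positivity), Finset.mul_sum]
  refine Finset.sum_le_sum fun j _ => ?_
  have h := Matrix.l2_opNorm_mulVec A (WithLp.toLp 2 fun i => M i j)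
  rw [← aux_specNorm_eq] at h
  have h2 := pow_le_pow_left₀ (norm_nonneg _) h 2
  rw [mul_pow, EuclideanSpace.real_norm_sq_eq, EuclideanSpace.real_norm_sq_eq] at h2
  exact h2

theorem aux_tanh (x y : ℝ) : |Real.tanh x - Real.tanh y| ≤ |x - y| := by
  have hd : ∀ x : ℝ, HasDerivAt Real.tanh (1 / Real.cosh x ^ 2) x := fun x => by
    have h := (Real.hasDerivAt_sinh x).div (Real.hasDerivAt_cosh x) (Real.cosh_pos x).ne'
    have e : Real.tanh = Real.sinh / Real.cosh := by
      funext z; exact Real.tanh_eq_sinh_div_cosh z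
    rw [e]
    have e2 : Real.cosh x * Real.cosh x - Real.sinh x * Real.sinh x = 1 := by
      nlinarith [Real.cosh_sq x]
    rwa [e2] at h
  have h := Convex.norm_image_sub_le_of_norm_hasDerivWithin_le (f := Real.tanh) (C := 1)
    (s := Set.univ) (fun x _ => (hd x).hasDerivWithinAt) (fun x _ => ?_) convex_univ
    (Set.mem_univ y) (Set.mem_univ x)
  · simpa using h
  · rw [Real.norm_of_nonneg (by positivity)]
    exact div_le_one_of_le₀ (by nlinarith [Real.one_le_cosh x]) (by positivity)

theorem aux_mtanh {m n : ℕ} (P Q : Matrix (Fin m) (Fin n) ℝ) :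
    frobNorm (mtanh P - mtanh Q) ≤ frobNorm (P - Q) := by
  unfold frobNorm
  refine Real.sqrt_le_sqrt (Finset.sum_le_sum fun i _ => Finset.sum_le_sum fun j _ => ?_)
  exact sq_le_sq.2 (aux_tanh (P i j) (Q i j))

open scoped Matrix.Norms.Frobenius in
theorem aux_frob_eq {m n : ℕ} (M : Matrix (Fin m) (Fin n) ℝ) : frobNorm M = ‖M‖ := by
  rw [Matrix.frobenius_norm_def, frobNorm, Real.sqrt_eq_rpow]
  simp

open scoped Matrix.Norms.Frobenius in
theorem aux_triangle {m n : ℕ} (P Q R : Matrix (Fin m) (Fin n) ℝ) :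
    frobNorm (P - R) ≤ frobNorm (P - Q) + frobNorm (Q - R) := by
  simp only [aux_frob_eq]
  exact norm_sub_le_norm_sub_add_norm_sub P Q R

theorem aux_contract {N F Hd : ℕ}
    (Atil : Matrix (Fin N) (Fin N) ℝ) (hA : Atil.IsHermitian)
    (W : Matrix (Fin Hd) (Fin Hd) ℝ) (V : Matrix (Fin F) (Fin Hd) ℝ)
    (X : Matrix (Fin N) (Fin F) ℝ) (P Q : Matrix (Fin N) (Fin Hd) ℝ) :
    frobNorm (resMap Atil W V X P - resMap Atil W V X Q)
      ≤ specRad Atil hA * specNorm W * frobNorm (P - Q) := by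
  refine (aux_mtanh _ _).trans ?_
  have e : Atil * P * W + X * V - (Atil * Q * W + X * V) = Atil * ((P - Q) * W) := by
    rw [← Matrix.mul_assoc, Matrix.mul_sub, Matrix.sub_mul]; abel
  rw [e]
  have h2 : frobNorm ((P - Q) * W) ≤ specNorm W * frobNorm (P - Q) := by
    rw [← aux_frob_transpose, Matrix.transpose_mul, ← aux_specNorm_transpose W,
      ← aux_frob_transpose (P - Q)]
    exact aux_frob_mul _ _
  calc _ ≤ specNorm Atil * frobNorm ((P - Q) * W) := aux_frob_mul _ _
    _ ≤ specRad Atil hA * (specNorm W * frobNorm (P - Q)) :=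
      mul_le_mul (aux_specNorm_le _ _) h2 (aux_frob_nonneg _)
        ((aux_spec_nonneg _).trans (aux_specNorm_le _ hA))
    _ = _ := by ring

/-- Inequality (14): ‖H* − H_t‖_F ≤ (K^t/(1 − K)) ‖H₁ − H₀‖_F. -/
theorem reservoir_iterates_dist_le_first_step {N F Hd : ℕ}
    (Atil : Matrix (Fin N) (Fin N) ℝ) (hA : Atil.IsHermitian)
    (W : Matrix (Fin Hd) (Fin Hd) ℝ) (V : Matrix (Fin F) (Fin Hd) ℝ)
    (X : Matrix (Fin N) (Fin F) ℝ)
    (hK : specRad Atil hA * specNorm W < 1)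
    (Hstar : Matrix (Fin N) (Fin Hd) ℝ)
    (hfix : resMap Atil W V X Hstar = Hstar)
    (H0 : Matrix (Fin N) (Fin Hd) ℝ) (t : ℕ) :
    frobNorm (Hstar - (resMap Atil W V X)^[t] H0)
      ≤ (specRad Atil hA * specNorm W) ^ t / (1 - specRad Atil hA * specNorm W)
          * frobNorm (resMap Atil W V X H0 - H0) := by

  have hc := aux_contract Atil hA W V X
  have hK0 : 0 ≤ specRad Atil hA * specNorm W :=
    mul_nonneg ((aux_spec_nonneg _).trans (aux_specNorm_le _ hA)) (aux_spec_nonneg _)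
  generalize specRad Atil hA * specNorm W = K at *
  generalize resMap Atil W V X = f at *
  have h0 : frobNorm (Hstar - H0) ≤ frobNorm (f H0 - H0) / (1 - K) := by
    rw [le_div_iff₀ (by linarith)]
    have h1 := aux_triangle Hstar (f H0) H0
    have h2 := hc Hstar H0
    rw [hfix] at h2
    linarith
  have ht : frobNorm (Hstar - f^[t] H0) ≤ K ^ t * frobNorm (Hstar - H0) := by
    induction t with
    | zero => simp
    | succ t ih =>
      rw [Function.iterate_succ_apply']
      have h2 := hc Hstar (f^[t] H0)
      rw [hfix] at h2
      calc _ ≤ _ := h2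
        _ ≤ K * (K ^ t * frobNorm (Hstar - H0)) := mul_le_mul_of_nonneg_left ih hK0
        _ = _ := by ring
  calc _ ≤ _ := ht
    _ ≤ K ^ t * (frobNorm (f H0 - H0) / (1 - K)) :=
      mul_le_mul_of_nonneg_left h0 (pow_nonneg hK0 t)
    _ = _ := by ring
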